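/- Let S be a smooth cubic surface in P^3 over a field K. If S contains a pair of skew K-lines, then H^0_S(K) = 0. In particular, if K is algebraically closed then H^0_S(K) = 0. -/

import Mathlib

/- Common framework: points, lines, intersection divisors, the secant-tangent span,
the groups `H_S(K)`, geometric notions over the algebraic closure, and topologies. -/

open MvPolynomial

noncomputable section

namespace CubicSurf

variable {K L : Type*} [Field K] [Field L] {n : ℕ}

/-- The set of `K`-rational points of the projective hypersurface `F = 0`. -/
def zeroSet (F : MvPolynomial (Fin n) K) : Set (Projectivization K (Fin n → K)) :=
  {P | eval P.rep F = 0}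

/-- The binary form obtained by restricting `F` to the line spanned by `u` and `v`,
via the parametrization `(s : t) ↦ s • u + t • v`. -/
def lineRestrict (F : MvPolynomial (Fin n) K) (u v : Fin n → K) : MvPolynomial (Fin 2) K :=
  aeval (fun i => C (u i) * X 0 + C (v i) * X 1) F

/-- A projective line: a 2-dimensional linear subspace of `K^n`. -/
def IsLine (W : Submodule K (Fin n → K)) : Prop := Module.finrank K W = 2

/-- The line `W` lies (geometrically) on the hypersurface `F = 0`. -/
def LineOnSurf (F : MvPolynomial (Fin n) K) (W : Submodule K (Fin n → K)) : Prop :=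
  ∀ u v : Fin n → K, u ∈ W → v ∈ W → lineRestrict F u v = 0

/-- The projective point `P` lies on the line `W`. -/
def OnLine (W : Submodule K (Fin n → K)) (P : Projectivization K (Fin n → K)) : Prop :=
  P.rep ∈ W

/-- The set of `K`-points of the line `W`. -/
def linePts (W : Submodule K (Fin n → K)) : Set (Projectivization K (Fin n → K)) :=
  {P | OnLine W P}

/-- `ℓ · S = P + Q + R`: the intersection divisor (with multiplicities) of the line `W`
with the hypersurface `F = 0` is `P + Q + R`. -/
def MeetsIn (F : MvPolynomial (Fin n) K) (W : Submodule K (Fin n → K))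
    (P Q R : Projectivization K (Fin n → K)) : Prop :=
  ∃ (u v : Fin n → K) (_ : u ∈ W) (_ : v ∈ W) (_ : LinearIndependent K ![u, v])
    (c : K) (l m : Fin 3 → K) (h : ∀ k, l k • u + m k • v ≠ 0),
      c ≠ 0 ∧
      lineRestrict F u v = C c * ∏ k : Fin 3, (C (m k) * X 0 - C (l k) * X 1) ∧
      Projectivization.mk K _ (h 0) = P ∧
      Projectivization.mk K _ (h 1) = Q ∧
      Projectivization.mk K _ (h 2) = R

/-- Membership in the span of a set of points under the secant/tangent process:
the smallest subset of `S(K)` containing `B` such that whenever `P`, `Q` are in it and a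
`K`-line `ℓ ⊄ S` satisfies `ℓ·S = P+Q+R` with `R ∈ S(K)`, then `R` is in it. -/
inductive SpanMem (F : MvPolynomial (Fin n) K) (B : Set (Projectivization K (Fin n → K))) :
    Projectivization K (Fin n → K) → Prop
  | base (P : Projectivization K (Fin n → K)) (hP : P ∈ B) : SpanMem F B P
  | secant (P Q R : Projectivization K (Fin n → K)) (W : Submodule K (Fin n → K))
      (hW : IsLine W) (hWS : ¬ LineOnSurf F W) (hP : SpanMem F B P) (hQ : SpanMem F B Q)
      (hR : R ∈ zeroSet F) (hm : MeetsIn F W P Q R) : SpanMem F B R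

/-- The span of a set of points under the secant/tangent process. -/
def Span (F : MvPolynomial (Fin n) K) (B : Set (Projectivization K (Fin n → K))) :
    Set (Projectivization K (Fin n → K)) :=
  {P | SpanMem F B P}

/-- Smoothness of the projective hypersurface `F = 0`: over the algebraic closure there is
no nonzero common zero of `F` and all of its partial derivatives. -/
def IsSmoothHypersurf (F : MvPolynomial (Fin n) K) : Prop :=
  ∀ v : Fin n → AlgebraicClosure K,
    eval v (MvPolynomial.map (algebraMap K (AlgebraicClosure K)) F) = 0 →
    (∀ i, eval v (pderiv i (MvPolynomial.map (algebraMap K (AlgebraicClosure K)) F)) = 0) →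
    v = 0

/-- A smooth cubic hypersurface. -/
def SmoothCubic (F : MvPolynomial (Fin n) K) : Prop :=
  F.IsHomogeneous 3 ∧ IsSmoothHypersurf F

/-- The linear form cutting out the tangent plane `Π_P` of `F = 0` at `P`,
evaluated at the representative of a point `Q`; `Q ∈ Π_P` iff this vanishes. -/
def tangentEval (F : MvPolynomial (Fin n) K) (P Q : Projectivization K (Fin n → K)) : K :=
  ∑ i, eval P.rep (pderiv i F) * Q.rep i

/-- The set of `K`-points of the tangent plane `Π_P`. -/
def tangentPlanePts (F : MvPolynomial (Fin n) K) (P : Projectivization K (Fin n → K)) :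
    Set (Projectivization K (Fin n → K)) :=
  {Q | tangentEval F P Q = 0}

/-- The set of `K`-points of `Γ_P = S ∩ Π_P`. -/
def GammaPts (F : MvPolynomial (Fin n) K) (P : Projectivization K (Fin n → K)) :
    Set (Projectivization K (Fin n → K)) :=
  zeroSet F ∩ tangentPlanePts F P

/-! ### Base change along a field embedding -/

/-- Base change of a vector along a field embedding. -/
def clVec (φ : K →+* L) (v : Fin n → K) : Fin n → L := fun i => φ (v i)

lemma clVec_ne_zero (φ : K →+* L) {v : Fin n → K} (hv : v ≠ 0) : clVec φ v ≠ 0 := by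
  intro h
  apply hv
  funext i
  have := congrFun h i
  simpa [clVec] using φ.injective (by simpa [clVec] using this)

/-- Base change of a projective point along a field embedding. -/
def clPt (φ : K →+* L) (P : Projectivization K (Fin n → K)) :
    Projectivization L (Fin n → L) :=
  Projectivization.mk L (clVec φ P.rep) (clVec_ne_zero φ P.rep_nonzero)

lemma eval_smul_of_isHomogeneous {R : Type*} [CommSemiring R] {F : MvPolynomial (Fin n) R}
    {d : ℕ} (hF : F.IsHomogeneous d) (a : R) (w : Fin n → R) :
    eval (a • w) F = a ^ d * eval w F := by
  classical
  rw [eval_eq', eval_eq', Finset.mul_sum]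
  refine Finset.sum_congr rfl fun s hs => ?_
  have hdeg : ∑ i, s i = d := by
    have h1 := hF (MvPolynomial.mem_support_iff.mp hs)
    rw [Finsupp.weight_apply] at h1
    rw [← h1, Finsupp.sum_fintype]
    · simp
    · intro i; simp
  have key : ∀ i : Fin n, (a • w) i ^ s i = a ^ s i * w i ^ s i := by
    intro i; simp [mul_pow]
  rw [Finset.prod_congr rfl (fun i _ => key i), Finset.prod_mul_distrib,
    Finset.prod_pow_eq_pow_sum, hdeg]
  ring

lemma clVec_eval (φ : K →+* L) (F : MvPolynomial (Fin n) K) (v : Fin n → K) :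
    eval (clVec φ v) (MvPolynomial.map φ F) = φ (eval v F) := by
  rw [eval_map]
  have h : φ (eval v F) = φ (eval₂Hom (RingHom.id K) v F) := rfl
  rw [h, map_eval₂Hom]
  rfl

/-- A point given by a vector on which a homogeneous `F` vanishes lies in the zero set. -/
lemma mk_mem_zeroSet {F : MvPolynomial (Fin n) K} {d : ℕ} (hF : F.IsHomogeneous d)
    {v : Fin n → K} (hv : v ≠ 0) (h : eval v F = 0) :
    Projectivization.mk K v hv ∈ zeroSet F := by
  obtain ⟨a, ha⟩ := Projectivization.exists_smul_eq_mk_rep K v hv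
  show eval (Projectivization.mk K v hv).rep F = 0
  have hrep : (Projectivization.mk K v hv).rep = (a : K) • v := by
    rw [← ha, Units.smul_def]
  rw [hrep, eval_smul_of_isHomogeneous hF, h, mul_zero]

lemma clPt_mem_zeroSet (φ : K →+* L) {F : MvPolynomial (Fin n) K} {d : ℕ}
    (hF : F.IsHomogeneous d) {P : Projectivization K (Fin n → K)} (hP : P ∈ zeroSet F) :
    clPt φ P ∈ zeroSet (MvPolynomial.map φ F) := by
  apply mk_mem_zeroSet (hF.map φ)
  rw [clVec_eval, hP, map_zero]

/-- The induced map on points of `S` under base change of the field. -/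
def ptMap (φ : K →+* L) {F : MvPolynomial (Fin n) K} {d : ℕ} (hF : F.IsHomogeneous d)
    (P : zeroSet F) : zeroSet (MvPolynomial.map φ F) :=
  ⟨clPt φ P.1, clPt_mem_zeroSet φ hF P.2⟩

/-- A subspace of `L^n` is defined over `K` (w.r.t. `φ : K →+* L`) if it is spanned by
the base change of a `K`-subspace. -/
def DefinedOver (φ : K →+* L) (W : Submodule L (Fin n → L)) : Prop :=
  ∃ W₀ : Submodule K (Fin n → K), W = Submodule.span L (clVec φ '' (W₀ : Set (Fin n → K)))

/-! ### Asymptotic lines, parabolic points, Eckardt points -/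

/-- The line `W` is asymptotic to `F = 0` at `P`: the intersection multiplicity
`(ℓ · S)_P` is at least 3. -/
def AsymptoticAt (F : MvPolynomial (Fin n) K) (W : Submodule K (Fin n → K))
    (P : Projectivization K (Fin n → K)) : Prop :=
  IsLine W ∧ P.rep ∈ W ∧
    ∃ v ∈ W, LinearIndependent K ![P.rep, v] ∧
      ∃ c : K, lineRestrict F P.rep v = C c * (X 1) ^ 3

/-- The set of asymptotic lines at `P`. -/
def AsymSet (F : MvPolynomial (Fin n) K) (P : Projectivization K (Fin n → K)) :
    Set (Submodule K (Fin n → K)) :=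
  {W | AsymptoticAt F W P}

/-- A point of a hypersurface is parabolic (relative to the given field) if it does
not have exactly two distinct asymptotic lines (i.e. it has one or infinitely many). -/
def ParabolicAt (F : MvPolynomial (Fin n) K) (P : Projectivization K (Fin n → K)) : Prop :=
  ¬ ∃ W₁ W₂ : Submodule K (Fin n → K), W₁ ≠ W₂ ∧ AsymSet F P = {W₁, W₂}

/-- An Eckardt point (relative to the given field): three distinct lines lying on the
surface pass through `P`. -/
def EckardtAt (F : MvPolynomial (Fin n) K) (P : Projectivization K (Fin n → K)) : Prop :=
  ∃ W₁ W₂ W₃ : Submodule K (Fin n → K), W₁ ≠ W₂ ∧ W₁ ≠ W₃ ∧ W₂ ≠ W₃ ∧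
    (∀ W ∈ ({W₁, W₂, W₃} : Set (Submodule K (Fin n → K))),
      IsLine W ∧ LineOnSurf F W ∧ OnLine W P)

section geometric

variable (F : MvPolynomial (Fin n) K)

/-- `F` base changed to the algebraic closure of `K`. -/
def clF : MvPolynomial (Fin n) (AlgebraicClosure K) :=
  MvPolynomial.map (algebraMap K (AlgebraicClosure K)) F

/-- A `K`-point of `S` is parabolic (a geometric notion, checked over `K̄`). -/
def IsParabolic (P : Projectivization K (Fin n → K)) : Prop :=
  ParabolicAt (clF F) (clPt (algebraMap K (AlgebraicClosure K)) P)

/-- A `K`-point of `S` is an Eckardt point (a geometric notion, checked over `K̄`). -/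
def IsEckardt (P : Projectivization K (Fin n → K)) : Prop :=
  EckardtAt (clF F) (clPt (algebraMap K (AlgebraicClosure K)) P)

/-- A `K`-point of `S` is `K`-hyperbolic: it has exactly two asymptotic lines over `K̄`,
and both are defined over `K`. -/
def IsHyperbolic (P : Projectivization K (Fin n → K)) : Prop :=
  ∃ W₁ W₂, W₁ ≠ W₂ ∧
    AsymSet (clF F) (clPt (algebraMap K (AlgebraicClosure K)) P) = {W₁, W₂} ∧
    DefinedOver (algebraMap K (AlgebraicClosure K)) W₁ ∧
    DefinedOver (algebraMap K (AlgebraicClosure K)) W₂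

/-- A `K`-point of `S` is `K`-ternary: at least one of the asymptotic lines of `S`
through `P` is defined over `K`. -/
def IsTernary (P : Projectivization K (Fin n → K)) : Prop :=
  ∃ W ∈ AsymSet (clF F) (clPt (algebraMap K (AlgebraicClosure K)) P),
    DefinedOver (algebraMap K (AlgebraicClosure K)) W

end geometric

/-! ### The group `H_S(K)` -/

variable (F : MvPolynomial (Fin n) K)

/-- `G_S(K)`: the free abelian group on the set `S(K)`. -/
abbrev GS := FreeAbelianGroup (zeroSet F)

/-- The degree homomorphism `G_S(K) → ℤ`, `Σ aᵢ Pᵢ ↦ Σ aᵢ`. -/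
def degHom : GS F →+ ℤ := FreeAbelianGroup.lift fun _ => (1 : ℤ)

/-- `P + Q + R` is a "three point sum": either cut out on `S` with multiplicity by a
`K`-line not contained in `S`, or `P`, `Q`, `R` all lie on a `K`-line contained in `S`. -/
def TripleRel (P Q R : zeroSet F) : Prop :=
  ∃ W : Submodule K (Fin n → K), IsLine W ∧
    ((¬ LineOnSurf F W ∧ MeetsIn F W P.1 Q.1 R.1) ∨
      (LineOnSurf F W ∧ OnLine W P.1 ∧ OnLine W Q.1 ∧ OnLine W R.1))

/-- `G'_S(K)`: the subgroup generated by all three point sums. -/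
def Gp : AddSubgroup (GS F) :=
  AddSubgroup.closure {x | ∃ P Q R : zeroSet F, TripleRel F P Q R ∧
    x = FreeAbelianGroup.of P + FreeAbelianGroup.of Q + FreeAbelianGroup.of R}

/-- `G''_S(K)`: the degree-0 part of `G'_S(K)`. -/
def Gpp : AddSubgroup (GS F) := Gp F ⊓ (degHom F).ker

/-- `H_S(K) = G_S(K)/G''_S(K)`. -/
abbrev HS := GS F ⧸ Gpp F

/-- The class `[P] ∈ H_S(K)` of a point `P ∈ S(K)`. -/
def HClass (P : zeroSet F) : HS F := QuotientAddGroup.mk' (Gpp F) (FreeAbelianGroup.of P)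

/-- The degree homomorphism `H_S(K) → ℤ`. -/
def HdegHom : HS F →+ ℤ :=
  QuotientAddGroup.lift (Gpp F) (degHom F) (fun _ hx => hx.2)

/-- `H⁰_S(K)`: the degree-0 part of `H_S(K)`. -/
def H0 : AddSubgroup (HS F) := (HdegHom F).ker

@[simp] lemma HdegHom_HClass (P : zeroSet F) : HdegHom F (HClass F P) = 1 := by
  simp [HdegHom, HClass, degHom]

/-- The class `[P] - [Q]`, as an element of `H⁰_S(K)`. -/
def H0diff (P Q : zeroSet F) : H0 F :=
  ⟨HClass F P - HClass F Q, by simp [H0, AddMonoidHom.mem_ker, map_sub]⟩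

/-! ### mod-`p` dimensions and torsion -/

/-- `A/pA` for an abelian group `A`. -/
abbrev ModP (p : ℕ) (A : Type*) [AddCommGroup A] : Type _ :=
  A ⧸ (AddMonoidHom.range (nsmulAddMonoidHom p : A →+ A))

instance ModP.instModule (p : ℕ) (A : Type*) [AddCommGroup A] : Module (ZMod p) (ModP p A) :=
  QuotientAddGroup.zmodModule (fun x => ⟨x, rfl⟩)

/-- `dim_{F_p} A/pA`. -/
def dimModP (p : ℕ) (A : Type*) [AddCommGroup A] : Cardinal := Module.rank (ZMod p) (ModP p A)

/-- The `k`-torsion subgroup `A[k]` of an abelian group `A`. -/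
def torsion (k : ℕ) (A : Type*) [AddCommGroup A] : AddSubgroup A :=
  (nsmulAddMonoidHom k : A →+ A).ker

instance torsion.instModule (k : ℕ) (A : Type*) [AddCommGroup A] :
    Module (ZMod k) (torsion k A) :=
  AddCommGroup.zmodModule (fun x => Subtype.ext x.2)

/-- `dim_{F_k} A[k]`: the dimension of the `k`-torsion subgroup (for `k` prime). -/
def dimTorsion (k : ℕ) (A : Type*) [AddCommGroup A] : Cardinal :=
  Module.rank (ZMod k) (torsion k A)

/-! ### Topologies -/

/-- The quotient topology on projective space induced by the topology of `K`. -/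
def projTop (K : Type*) [Field K] [TopologicalSpace K] (n : ℕ) :
    TopologicalSpace (Projectivization K (Fin n → K)) :=
  TopologicalSpace.coinduced
    (fun v : {v : Fin n → K // v ≠ 0} => Projectivization.mk K v.1 v.2) inferInstance

/-- The induced topology on the set of `K`-points of `S`. -/
def surfTop (F : MvPolynomial (Fin n) K) [TopologicalSpace K] :
    TopologicalSpace (zeroSet F) :=
  TopologicalSpace.induced Subtype.val (projTop K n)

/-- `K` (a topological field) is a local field: it is isomorphic, as a topological field,
to `ℝ`, to `ℂ`, or to a finite extension of `ℚ_p` for some prime `p` (with its canonical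
topology, namely the `ℚ_p`-vector space topology). -/
def IsLocalField (K : Type*) [Field K] [TopologicalSpace K] : Prop :=
  (∃ e : K ≃+* ℝ, IsHomeomorph e) ∨ (∃ e : K ≃+* ℂ, IsHomeomorph e) ∨
    (∃ (p : ℕ), p.Prime ∧ ∃ (_ : Fact p.Prime) (f : ℚ_[p] →+* K) (m : ℕ)
      (e : K ≃+ (Fin m → ℚ_[p])),
      (∀ (c : ℚ_[p]) (x : K), e (f c * x) = c • e x) ∧ IsHomeomorph e)

end CubicSurf

namespace CubicSurf

section proofs

variable {K : Type*} [Field K] {n : ℕ}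

/-- `F` is the cubic form associated to a (not necessarily symmetric) trilinear form `T`. -/
def IsTri (F : MvPolynomial (Fin n) K)
    (T : (Fin n → K) →ₗ[K] (Fin n → K) →ₗ[K] (Fin n → K) →ₗ[K] K) : Prop :=
  (∀ v, eval v F = T v v v) ∧
  ∀ u v, lineRestrict F u v = C (T u u u) * X 0 ^ 3
    + C (T u u v + T u v u + T v u u) * (X 0 ^ 2 * X 1)
    + C (T u v v + T v u v + T v v u) * (X 0 * X 1 ^ 2) + C (T v v v) * X 1 ^ 3

lemma isTri_zero : IsTri (0 : MvPolynomial (Fin n) K) 0 := by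
  constructor
  · intro v; simp
  · intro u v; simp [lineRestrict]

lemma IsTri.add {F G : MvPolynomial (Fin n) K} {S T} (hF : IsTri F S) (hG : IsTri G T) :
    IsTri (F + G) (S + T) := by
  constructor
  · intro v; simp [hF.1, hG.1]
  · intro u v
    have h1 := hF.2 u v
    have h2 := hG.2 u v
    simp only [lineRestrict, map_add] at h1 h2 ⊢
    rw [h1, h2]
    simp only [LinearMap.add_apply, map_add]
    ring

lemma isTri_monomial (s : Fin n →₀ ℕ) (a : K) (hs : s.degree = 3) :
    ∃ T, IsTri (monomial s a) T := by
  have hc : (Finsupp.toMultiset s).card = 3 := by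
    rw [Finsupp.card_toMultiset]; exact hs
  obtain ⟨i, j, k, h⟩ := Multiset.card_eq_three.1 hc
  have hs' : s = Finsupp.single i 1 + Finsupp.single j 1 + Finsupp.single k 1 := by
    apply Multiset.toFinsupp.symm.injective
    change Finsupp.toMultiset _ = Finsupp.toMultiset _
    rw [h]
    simp only [map_add, Finsupp.toMultiset_single, one_smul]
    rfl
  have hm : monomial s a = C a * (X i * X j * X k) := by
    rw [hs', X, X, X, monomial_mul, monomial_mul, C_mul_monomial]
    simp
  refine ⟨a • (LinearMap.proj i : (Fin n → K) →ₗ[K] K).smulRight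
    ((LinearMap.proj j : (Fin n → K) →ₗ[K] K).smulRight
      (LinearMap.proj k : (Fin n → K) →ₗ[K] K)), ?_, ?_⟩
  · intro v
    simp [hm, mul_assoc]
  · intro u v
    simp only [lineRestrict, hm]
    simp
    ring

lemma exists_isTri {F : MvPolynomial (Fin n) K} (hF : F.IsHomogeneous 3) :
    ∃ T, IsTri F T := by
  rw [F.as_sum]
  refine Finset.sum_induction _ (fun G => ∃ T, IsTri G T) ?_ ⟨0, isTri_zero⟩ ?_
  · rintro G H ⟨S, hS⟩ ⟨T, hT⟩
    exact ⟨_, hS.add hT⟩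
  · intro s hs
    apply isTri_monomial
    have h1 := hF (MvPolynomial.mem_support_iff.mp hs)
    rw [← h1, Finsupp.degree_eq_weight_one]
    rfl

lemma lineRestrict_comb (F : MvPolynomial (Fin n) K) (u v : Fin n → K) (a b c d : K) :
    lineRestrict F (a • u + b • v) (c • u + d • v) =
      aeval (![C a * X 0 + C c * X 1, C b * X 0 + C d * X 1] : Fin 2 → MvPolynomial (Fin 2) K)
        (lineRestrict F u v) := by
  unfold lineRestrict
  rw [← AlgHom.comp_apply, comp_aeval]
  congr 2
  funext i
  simp [algebraMap_eq]
  ring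

lemma lineOnSurf_span {F : MvPolynomial (Fin n) K} {u v : Fin n → K}
    (h : lineRestrict F u v = 0) : LineOnSurf F (Submodule.span K {u, v}) := by
  intro p q hp hq
  obtain ⟨a, b, rfl⟩ := Submodule.mem_span_pair.1 hp
  obtain ⟨c, d, rfl⟩ := Submodule.mem_span_pair.1 hq
  rw [lineRestrict_comb, h, map_zero]

lemma isLine_span {u v : Fin n → K} (h : LinearIndependent K ![u, v]) :
    IsLine (Submodule.span K {u, v}) := by
  have := finrank_span_eq_card h
  rw [Matrix.range_cons_cons_empty] at this
  simpa [IsLine] using this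

lemma onLine_mk {W : Submodule K (Fin n → K)} {v : Fin n → K} (hv : v ≠ 0) (h : v ∈ W) :
    OnLine W (Projectivization.mk K v hv) := by
  obtain ⟨a, ha⟩ := Projectivization.exists_smul_eq_mk_rep K v hv
  unfold OnLine
  rw [← ha]
  exact W.smul_mem _ h

/-- The key way of producing three point sums. -/
lemma tripleRel_of {F : MvPolynomial (Fin n) K} {u v : Fin n → K}
    (hi : LinearIndependent K ![u, v]) (c : K) (l m : Fin 3 → K)
    (hlm : ∀ k, l k • u + m k • v ≠ 0)
    (h : lineRestrict F u v = C c * ∏ k : Fin 3, (C (m k) * X 0 - C (l k) * X 1))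
    (P Q R : zeroSet F)
    (hP : Projectivization.mk K _ (hlm 0) = P.1)
    (hQ : Projectivization.mk K _ (hlm 1) = Q.1)
    (hR : Projectivization.mk K _ (hlm 2) = R.1) : TripleRel F P Q R := by
  have hu : u ∈ Submodule.span K {u, v} := Submodule.subset_span (by simp)
  have hv : v ∈ Submodule.span K {u, v} := Submodule.subset_span (by simp)
  refine ⟨Submodule.span K {u, v}, isLine_span hi, ?_⟩
  by_cases h0 : lineRestrict F u v = 0
  · right
    refine ⟨lineOnSurf_span h0, ?_, ?_, ?_⟩
    · rw [← hP]; exact onLine_mk _ (add_mem (Submodule.smul_mem _ _ hu) (Submodule.smul_mem _ _ hv))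
    · rw [← hQ]; exact onLine_mk _ (add_mem (Submodule.smul_mem _ _ hu) (Submodule.smul_mem _ _ hv))
    · rw [← hR]; exact onLine_mk _ (add_mem (Submodule.smul_mem _ _ hu) (Submodule.smul_mem _ _ hv))
  · left
    refine ⟨fun hl => h0 (hl u v hu hv), u, v, hu, hv, hi, c, l, m, hlm, ?_, h, hP, hQ, hR⟩
    rintro rfl
    exact h0 (by rw [h]; simp)

/-- All three point sums have the same class. -/
lemma HClass_sum_eq {F : MvPolynomial (Fin n) K} {P Q R P' Q' R' : zeroSet F}
    (h : TripleRel F P Q R) (h' : TripleRel F P' Q' R') :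
    HClass F P + HClass F Q + HClass F R = HClass F P' + HClass F Q' + HClass F R' := by
  unfold HClass
  rw [← map_add, ← map_add, ← map_add, ← map_add]
  rw [← sub_eq_zero, ← map_sub, QuotientAddGroup.mk'_apply, QuotientAddGroup.eq_zero_iff]
  refine ⟨(Gp F).sub_mem (AddSubgroup.subset_closure ⟨P, Q, R, h, rfl⟩)
    (AddSubgroup.subset_closure ⟨P', Q', R', h', rfl⟩), ?_⟩
  simp [degHom]

lemma H0_eq_bot_of {F : MvPolynomial (Fin n) K}
    (h : ∀ P Q : zeroSet F, HClass F P = HClass F Q) : H0 F = ⊥ := by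
  obtain ⟨c, hc⟩ : ∃ c, ∀ P, HClass F P = c := by
    by_cases hn : Nonempty (zeroSet F)
    · exact ⟨HClass F hn.some, fun P => h _ _⟩
    · exact ⟨0, fun P => (hn ⟨P⟩).elim⟩
  have key : QuotientAddGroup.mk' (Gpp F) = (zmultiplesHom _ c).comp (degHom F) := by
    apply FreeAbelianGroup.lift_ext
    intro P
    have := hc P
    unfold HClass at this
    rw [this]
    simp [degHom]
  rw [eq_bot_iff]
  intro x hx
  obtain ⟨g, rfl⟩ := QuotientAddGroup.mk'_surjective (Gpp F) x
  have hg : degHom F g = 0 := hx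
  rw [key]
  simp [hg]

/-- The point of the surface defined by a vector. -/
def pt {F : MvPolynomial (Fin n) K} (hF : F.IsHomogeneous 3) (u : Fin n → K) (hu : u ≠ 0)
    (h : eval u F = 0) : zeroSet F :=
  ⟨Projectivization.mk K u hu, mk_mem_zeroSet hF hu h⟩

lemma exists_pt {F : MvPolynomial (Fin n) K} (hF : F.IsHomogeneous 3) (P : zeroSet F) :
    ∃ u hu h, P = pt hF u hu h :=
  ⟨P.1.rep, P.1.rep_nonzero, P.2, Subtype.ext (Projectivization.mk_rep P.1).symm⟩

lemma pt_smul {F : MvPolynomial (Fin n) K} (hF : F.IsHomogeneous 3) (u v : Fin n → K) (hu hv h h')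
    (a : K) (e : a • u = v) : pt hF u hu h = pt hF v hv h' := by
  apply Subtype.ext
  simp only [pt]
  rw [eq_comm, Projectivization.mk_eq_mk_iff']
  exact ⟨a, e⟩

/-- Tangent lines. -/
lemma tripleRel_tangent {F : MvPolynomial (Fin n) K} (hF : F.IsHomogeneous 3) {T}
    (hT : IsTri F T) {u v : Fin n → K} (hi : LinearIndependent K ![u, v])
    (hu hu0 hv hv0) (hb : T u u v + T u v u + T v u u = 0) :
    TripleRel F (pt hF u hu hu0) (pt hF u hu hu0) (pt hF v hv hv0) := by
  refine tripleRel_of hi (T u v v + T v u v + T v v u) ![1, 1, 0] ![0, 0, 1] ?_ ?_ _ _ _ ?_ ?_ ?_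
  · intro k; fin_cases k <;> simpa
  · rw [hT.2, hb, ← hT.1, ← hT.1, hu0, hv0, Fin.prod_univ_three]
    simp [-mul_eq_mul_left_iff]
    ring
  all_goals simp [pt]

/-- Asymptotic lines. -/
lemma tripleRel_asymptotic {F : MvPolynomial (Fin n) K} (hF : F.IsHomogeneous 3) {T}
    (hT : IsTri F T) {u v : Fin n → K} (hi : LinearIndependent K ![u, v])
    (hu hu0) (hb : T u u v + T u v u + T v u u = 0) (hc : T u v v + T v u v + T v v u = 0) :
    TripleRel F (pt hF u hu hu0) (pt hF u hu hu0) (pt hF u hu hu0) := by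
  refine tripleRel_of hi (- T v v v) ![1, 1, 1] ![0, 0, 0] ?_ ?_ _ _ _ ?_ ?_ ?_
  · intro k; fin_cases k <;> simpa
  · rw [hT.2, hb, hc, ← hT.1 u, hu0, Fin.prod_univ_three]
    simp [-mul_eq_mul_left_iff]
    ring
  all_goals simp [pt]

/-- Secant lines through two points. -/
lemma tripleRel_secant {F : MvPolynomial (Fin n) K} (hF : F.IsHomogeneous 3) {T}
    (hT : IsTri F T) {u v : Fin n → K} (hi : LinearIndependent K ![u, v])
    (hu hu0 hv hv0 hw hw0) :
    TripleRel F (pt hF u hu hu0) (pt hF v hv hv0) (pt hF (u + v) hw hw0) := by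
  have e : T u v v + T v u v + T v v u = - (T u u v + T u v u + T v u u) := by
    have h1 := hu0; have h2 := hv0; have h3 := hw0
    rw [hT.1] at h1 h2 h3
    simp only [map_add, LinearMap.add_apply] at h3
    linear_combination h3 - h1 - h2
  refine tripleRel_of hi (-(T u u v + T u v u + T v u u)) ![1, 0, 1] ![0, 1, 1] ?_ ?_ _ _ _ ?_ ?_ ?_
  · intro k; fin_cases k <;> simpa
  · rw [hT.2, e, ← hT.1 u, ← hT.1 v, hu0, hv0, Fin.prod_univ_three]
    simp [-mul_eq_mul_left_iff]
    ring
  all_goals simp [pt]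

/-- The linear form `v ↦ dF_u(v)`. -/
def tanForm (T : (Fin n → K) →ₗ[K] (Fin n → K) →ₗ[K] (Fin n → K) →ₗ[K] K) (u : Fin n → K) :
    (Fin n → K) →ₗ[K] K := T u u + (T u).flip u + (T.flip u).flip u

lemma tanForm_apply (T : (Fin n → K) →ₗ[K] (Fin n → K) →ₗ[K] (Fin n → K) →ₗ[K] K)
    (u v : Fin n → K) : tanForm T u v = T u u v + T u v u + T v u u := rfl

lemma exists_mem_not_mem {U W : Submodule K (Fin n → K)}
    (h : Module.finrank K U < Module.finrank K W) : ∃ x ∈ W, x ∉ U := by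
  by_contra! hc
  exact absurd (Submodule.finrank_mono (show W ≤ U from hc)) (not_le.2 h)

lemma linInd_of_not_mem {u v : Fin n → K} (hu : u ≠ 0) (h : v ∉ Submodule.span K {u}) :
    LinearIndependent K ![u, v] := by
  rw [LinearIndependent.pair_iff' hu]
  intro a ha
  exact h (Submodule.mem_span_singleton.2 ⟨a, ha⟩)

/-! ### Skew lines -/

lemma skew_case {F : MvPolynomial (Fin 4) K} (hF : F.IsHomogeneous 3)
    {W₁ W₂ : Submodule K (Fin 4 → K)} (l₁ : IsLine W₁) (l₂ : IsLine W₂)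
    (s₁ : LineOnSurf F W₁) (s₂ : LineOnSurf F W₂) (hd : W₁ ⊓ W₂ = ⊥) : H0 F = ⊥ := by
  obtain ⟨T, hT⟩ := exists_isTri hF
  have zer : ∀ W, LineOnSurf F W → ∀ u ∈ W, eval u F = 0 := by
    intro W hW u hu
    have h := hW u 0 hu W.zero_mem
    rw [hT.2] at h
    have := congrArg (eval ![1, 0]) h
    simpa [hT.1] using this
  have ind : ∀ u ∈ W₁, ∀ v ∈ W₂, u ≠ 0 → v ≠ 0 → LinearIndependent K ![u, v] := by
    intro u hu v hv h1 h2
    rw [LinearIndependent.pair_iff' h1]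
    rintro a rfl
    apply h2
    have : a • u ∈ W₁ ⊓ W₂ := ⟨W₁.smul_mem _ hu, hv⟩
    rwa [hd] at this
  obtain ⟨u, hu, hu0⟩ : ∃ u ∈ W₁, u ∉ (⊥ : Submodule K (Fin 4 → K)) :=
    exists_mem_not_mem (by rw [l₁]; simp)
  obtain ⟨v, ⟨hv, hvk⟩, hv0⟩ : ∃ v ∈ W₂ ⊓ LinearMap.ker (tanForm T u),
      v ∉ (⊥ : Submodule K (Fin 4 → K)) := by
    apply exists_mem_not_mem
    have h1 := Submodule.finrank_add_le_finrank_add_finrank W₂ (LinearMap.ker (tanForm T u))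
    have h2 := Submodule.finrank_sup_add_finrank_inf_eq W₂ (LinearMap.ker (tanForm T u))
    have h3 := LinearMap.finrank_range_add_finrank_ker (tanForm T u)
    have h4 := Submodule.finrank_le (LinearMap.range (tanForm T u))
    have h5 := Submodule.finrank_le (W₂ ⊔ LinearMap.ker (tanForm T u))
    have h6 : Module.finrank K W₂ = 2 := l₂
    simp at h3 h4 h5 ⊢
    omega
  rw [Submodule.mem_bot] at hu0 hv0
  have hFu := zer _ s₁ u hu
  have hFv := zer _ s₂ v hv
  have hpp : TripleRel F (pt hF u hu0 hFu) (pt hF u hu0 hFu) (pt hF u hu0 hFu) :=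
    ⟨W₁, l₁, Or.inr ⟨s₁, onLine_mk _ hu, onLine_mk _ hu, onLine_mk _ hu⟩⟩
  have hvc : HClass F (pt hF v hv0 hFv) = HClass F (pt hF u hu0 hFu) :=
    add_left_cancel (HClass_sum_eq (tripleRel_tangent hF hT (ind u hu v hv hu0 hv0) hu0 hFu hv0 hFv
      hvk) hpp)
  have on1 : ∀ p ∈ W₁, ∀ hp0 hp1, HClass F (pt hF p hp0 hp1) = HClass F (pt hF u hu0 hFu) := by
    intro p hp hp0 hp1
    exact add_left_cancel (HClass_sum_eq (F := F) (P := pt hF u hu0 hFu) (Q := pt hF u hu0 hFu)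
      ⟨W₁, l₁, Or.inr ⟨s₁, onLine_mk _ hu, onLine_mk _ hu, onLine_mk _ hp⟩⟩ hpp)
  have on2 : ∀ p ∈ W₂, ∀ hp0 hp1, HClass F (pt hF p hp0 hp1) = HClass F (pt hF u hu0 hFu) := by
    intro p hp hp0 hp1
    rw [← hvc]
    exact add_left_cancel (HClass_sum_eq (F := F) (P := pt hF v hv0 hFv) (Q := pt hF v hv0 hFv)
      ⟨W₂, l₂, Or.inr ⟨s₂, onLine_mk _ hv, onLine_mk _ hv, onLine_mk _ hp⟩⟩
      ⟨W₂, l₂, Or.inr ⟨s₂, onLine_mk _ hv, onLine_mk _ hv, onLine_mk _ hv⟩⟩)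
  have hsup : W₁ ⊔ W₂ = ⊤ := by
    apply Submodule.eq_top_of_finrank_eq
    have h2 := Submodule.finrank_sup_add_finrank_inf_eq W₁ W₂
    have h6 : Module.finrank K W₁ = 2 := l₁
    have h7 : Module.finrank K W₂ = 2 := l₂
    rw [hd] at h2
    simp at h2 ⊢
    omega
  have all : ∀ R, HClass F R = HClass F (pt hF u hu0 hFu) := by
    intro R
    obtain ⟨r, hr0, hr1, rfl⟩ := exists_pt hF R
    obtain ⟨p, hp, q, hq, rfl⟩ := Submodule.mem_sup.1 (show r ∈ W₁ ⊔ W₂ by rw [hsup]; trivial)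
    by_cases p0 : p = 0
    · exact on2 _ (by simpa [p0] using hq) _ _
    by_cases q0 : q = 0
    · exact on1 _ (by simpa [q0] using hp) _ _
    have := HClass_sum_eq (tripleRel_secant hF hT (ind p hp q hq p0 q0) p0 (zer _ s₁ p hp) q0
      (zer _ s₂ q hq) hr0 hr1) hpp
    rw [on1 p hp, on2 q hq] at this
    exact add_left_cancel this
  exact H0_eq_bot_of fun P Q => (all P).trans (all Q).symm

/-! ### Algebraically closed fields -/

lemma exists_cubic_root [IsAlgClosed K] {a b c d : K} (ha : a ≠ 0) :
    ∃ x, a * x ^ 3 + b * x ^ 2 + c * x + d = 0 := by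
  obtain ⟨x, hx⟩ := IsAlgClosed.exists_root
    (Polynomial.C a * Polynomial.X ^ 3 + Polynomial.C b * Polynomial.X ^ 2 +
      Polynomial.C c * Polynomial.X + Polynomial.C d) (by
      rw [Polynomial.degree_cubic ha]; decide)
  exact ⟨x, by simpa [Polynomial.IsRoot] using hx⟩

lemma exists_quadratic_root [IsAlgClosed K] {b c d : K} (hb : b ≠ 0) :
    ∃ x, b * x ^ 2 + c * x + d = 0 := by
  obtain ⟨x, hx⟩ := IsAlgClosed.exists_root
    (Polynomial.C b * Polynomial.X ^ 2 +
      Polynomial.C c * Polynomial.X + Polynomial.C d) (by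
      rw [Polynomial.degree_quadratic hb]; decide)
  exact ⟨x, by simpa [Polynomial.IsRoot] using hx⟩

lemma exists_asymptotic [IsAlgClosed K] {F : MvPolynomial (Fin 4) K} (hF : F.IsHomogeneous 3)
    {T} (hT : IsTri F T) (u : Fin 4 → K) (hu hu0) :
    TripleRel F (pt hF u hu hu0) (pt hF u hu hu0) (pt hF u hu hu0) := by
  classical
  have h3 := LinearMap.finrank_range_add_finrank_ker (tanForm T u)
  have h4 := Submodule.finrank_le (LinearMap.range (tanForm T u))
  simp at h3 h4
  obtain ⟨v, hv, hv0⟩ : ∃ v ∈ LinearMap.ker (tanForm T u), v ∉ Submodule.span K {u} := by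
    apply exists_mem_not_mem
    have := finrank_span_le_card (R := K) ({u} : Set (Fin 4 → K))
    simp at this
    omega
  obtain ⟨w, hw, hw0⟩ : ∃ w ∈ LinearMap.ker (tanForm T u), w ∉ Submodule.span K {u, v} := by
    apply exists_mem_not_mem
    have := finrank_span_finset_le_card (R := K) ({u, v} : Finset (Fin 4 → K))
    have h2 := Finset.card_le_two (a := u) (b := v)
    rw [Set.finrank, Finset.coe_pair] at this
    omega
  by_cases hc : T u v v + T v u v + T v v u = 0
  · exact tripleRel_asymptotic hF hT (linInd_of_not_mem hu hv0) hu hu0 hv hc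
  · obtain ⟨x, hx⟩ := exists_quadratic_root (b := T u v v + T v u v + T v v u)
      (c := T u v w + T v u w + T v w u + (T u w v + T w u v + T w v u))
      (d := T u w w + T w u w + T w w u) hc
    have hk : x • v + w ∈ LinearMap.ker (tanForm T u) :=
      add_mem (Submodule.smul_mem _ _ hv) hw
    refine tripleRel_asymptotic hF hT (v := x • v + w) (linInd_of_not_mem hu ?_) hu hu0 hk ?_
    · intro h
      obtain ⟨a, ha⟩ := Submodule.mem_span_singleton.1 h
      refine hw0 (Submodule.mem_span_pair.2 ⟨a, -x, ?_⟩)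
      rw [ha]; simp
    · simp only [map_add, map_smul, LinearMap.add_apply, LinearMap.smul_apply, smul_eq_mul]
      linear_combination hx

lemma algClosed_case [IsAlgClosed K] {F : MvPolynomial (Fin 4) K} (hF : F.IsHomogeneous 3) :
    H0 F = ⊥ := by
  obtain ⟨T, hT⟩ := exists_isTri hF
  have tan : ∀ u hu hu0 q hq hq0, tanForm T u q = 0 →
      HClass F (pt hF q hq hq0) = HClass F (pt hF u hu hu0) := by
    intro u hu hu0 q hq hq0 h
    by_cases hi : LinearIndependent K ![u, q]
    · exact add_left_cancel (HClass_sum_eq (tripleRel_tangent hF hT hi hu hu0 hq hq0 h)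
        (exists_asymptotic hF hT u hu hu0))
    · rw [LinearIndependent.pair_iff' hu] at hi
      push Not at hi
      obtain ⟨a, ha⟩ := hi
      rw [pt_smul hF u q hu hq hu0 hq0 a ha]
  refine H0_eq_bot_of fun P Q => ?_
  obtain ⟨u, hu, hu0, rfl⟩ := exists_pt hF P
  obtain ⟨v, hv, hv0, rfl⟩ := exists_pt hF Q
  suffices h : ∃ q, q ≠ 0 ∧ eval q F = 0 ∧ tanForm T u q = 0 ∧ tanForm T v q = 0 by
    obtain ⟨q, h0, h1, h2, h3⟩ := h
    rw [← tan u hu hu0 q h0 h1 h2, tan v hv hv0 q h0 h1 h3]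
  set f := (tanForm T u).prod (tanForm T v) with hf
  have h3 := LinearMap.finrank_range_add_finrank_ker f
  have h4 := Submodule.finrank_le (LinearMap.range f)
  simp at h3 h4
  have hker : ∀ x ∈ LinearMap.ker f, tanForm T u x = 0 ∧ tanForm T v x = 0 := by
    intro x hx
    simpa [hf] using hx
  obtain ⟨p, hp, hp0⟩ : ∃ v ∈ LinearMap.ker f, v ∉ (⊥ : Submodule K (Fin 4 → K)) := by
    apply exists_mem_not_mem
    simp
    omega
  obtain ⟨q, hq, hq0⟩ : ∃ v ∈ LinearMap.ker f, v ∉ Submodule.span K {p} := by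
    apply exists_mem_not_mem
    have := finrank_span_le_card (R := K) ({p} : Set (Fin 4 → K))
    simp at this
    omega
  by_cases hFp : eval p F = 0
  · exact ⟨p, hp0, hFp, hker p hp⟩
  · rw [hT.1] at hFp
    obtain ⟨x, hx⟩ := exists_cubic_root (a := T p p p) (b := T p p q + T p q p + T q p p)
      (c := T p q q + T q p q + T q q p) (d := T q q q) hFp
    refine ⟨x • p + q, ?_, ?_, hker _ (add_mem (Submodule.smul_mem _ _ hp) hq)⟩
    · intro h
      refine hq0 (Submodule.mem_span_singleton.2 ⟨-x, ?_⟩)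
      rw [neg_smul]
      exact neg_eq_of_add_eq_zero_right h
    · rw [hT.1]
      simp only [map_add, map_smul, LinearMap.add_apply, LinearMap.smul_apply, smul_eq_mul]
      linear_combination hx

end proofs

end CubicSurf

open CubicSurf MvPolynomial in
/-- Let `S` be a smooth cubic surface over a field `K`. If `S`
contains a pair of skew `K`-lines then `H⁰_S(K) = 0`; in particular, if `K` is
algebraically closed then `H⁰_S(K) = 0`. -/
theorem H0_eq_bot_of_skew_lines
    {K : Type*} [Field K]
    (F : MvPolynomial (Fin 4) K) (hF : SmoothCubic F) :
    ((∃ W₁ W₂ : Submodule K (Fin 4 → K), IsLine W₁ ∧ IsLine W₂ ∧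
      LineOnSurf F W₁ ∧ LineOnSurf F W₂ ∧ W₁ ⊓ W₂ = ⊥) → H0 F = ⊥) ∧
    (IsAlgClosed K → H0 F = ⊥) := by
  refine ⟨?_, fun _ => algClosed_case hF.1⟩
  rintro ⟨W₁, W₂, l₁, l₂, s₁, s₂, hd⟩
  exact skew_case hF.1 l₁ l₂ s₁ s₂ hd
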